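/- Suppose the unit vectors u_1,…,u_m and positive weights c_1,…,c_m satisfy John's conditions, and let K = {x ∈ ℝ^n : ⟨x, u_i⟩ ≤ 1 for all i}. If E is the ellipsoid {x ∈ ℝ^n : Σ_{j=1}^n α_j^{-2} ⟨x−y, v_j⟩² ≤ 1}, for a point y ∈ ℝ^n, an orthonormal basis (v_j)_{j=1}^n of ℝ^n and positive reals (α_j)_{j=1}^n, and E ⊆ K with ∏_{j=1}^n α_j = 1, then α_j = 1 for all j and y = 0; that is, the Euclidean unit ball is the unique ellipsoid of maximal volume contained in K. -/

import Mathlib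

open Finset RealInnerProductSpace

/-!
The diagonal map taking the unit ball to `E` sends the contact point `u i` to the point
`y + ∑ j, (α j * ⟪u i, v j⟫) • v j` of `E ⊆ K`. Pairing it with `u i` gives
`⟪y, u i⟫ + ∑ j, α j * ⟪u i, v j⟫ ^ 2 ≤ 1`, and averaging over `i` with the weights `c i` turns
this into `∑ j, α j ≤ n`: the centre drops out, the quadratic form averages to its trace, and the
weights have total mass `n`. Since `∏ j, α j ≥ 1`, this is the equality case of AM-GM, so every
`α j` is `1`. The first inequality then reads `⟪y, u i⟫ ≤ 0` for all `i`; as these numbers have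
weighted sum zero, `y` is orthogonal to every `u i` of positive weight, hence zero.
-/

theorem eq_one_of_one_le_prod_of_sum_le_card {ι : Type*} {s : Finset ι} {a : ι → ℝ}
    (ha : ∀ i ∈ s, 0 < a i) (hprod : 1 ≤ ∏ i ∈ s, a i) (hsum : ∑ i ∈ s, a i ≤ #s) :
    ∀ i ∈ s, a i = 1 := by
  have hlog : 0 ≤ ∑ i ∈ s, Real.log (a i) := by
    rw [← Real.log_prod fun i hi => (ha i hi).ne']
    exact Real.log_nonneg hprod
  have hgap : ∀ i ∈ s, 0 ≤ a i - 1 - Real.log (a i) := fun i hi =>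
    sub_nonneg.2 (Real.log_le_sub_one_of_pos (ha i hi))
  have hgap_sum : ∑ i ∈ s, (a i - 1 - Real.log (a i)) = 0 := by
    refine le_antisymm ?_ (sum_nonneg hgap)
    simp only [sum_sub_distrib, sum_const, nsmul_eq_mul, mul_one]
    linarith
  intro i hi
  have hgap_eq := (sum_eq_zero_iff_of_nonneg hgap).1 hgap_sum i hi
  by_contra hne
  linarith [Real.log_lt_sub_one_of_pos (ha i hi) hne]

section

variable {ι κ E : Type*} [Fintype ι] [Fintype κ] [NormedAddCommGroup E] [InnerProductSpace ℝ E]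
  {u : ι → E} {c : ι → ℝ} {v : OrthonormalBasis κ ℝ E} {α : κ → ℝ} {y : E}

theorem sum_mul_inner_eq_zero (hu : ∑ i, c i • u i = 0) (x : E) : ∑ i, c i * ⟪x, u i⟫ = 0 := by
  simpa only [inner_sum, real_inner_smul_right, inner_zero_right] using congrArg (⟪x, ·⟫) hu

/-- The decomposition of the identity `∑ i, c i • (u i ⊗ u i) = 1` in John's theorem, written as
its action on vectors. -/
def IsIdentityDecomposition (u : ι → E) (c : ι → ℝ) : Prop :=
  ∀ x, ∑ i, (c i * ⟪u i, x⟫) • u i = x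

namespace IsIdentityDecomposition

theorem sum_mul_inner_sq (h : IsIdentityDecomposition u c) (x : E) :
    ∑ i, c i * ⟪u i, x⟫ ^ 2 = ‖x‖ ^ 2 := by
  calc ∑ i, c i * ⟪u i, x⟫ ^ 2 = ⟪∑ i, (c i * ⟪u i, x⟫) • u i, x⟫ := by
        simp only [sum_inner, real_inner_smul_left, mul_assoc, sq]
    _ = ‖x‖ ^ 2 := by rw [h x, real_inner_self_eq_norm_sq]

theorem sum_mul_sum_mul_inner_sq (h : IsIdentityDecomposition u c) {e : κ → E}
    (he : ∀ j, ‖e j‖ = 1) (a : κ → ℝ) :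
    ∑ i, c i * ∑ j, a j * ⟪u i, e j⟫ ^ 2 = ∑ j, a j := by
  calc ∑ i, c i * ∑ j, a j * ⟪u i, e j⟫ ^ 2 = ∑ j, a j * ∑ i, c i * ⟪u i, e j⟫ ^ 2 := by
        simp only [mul_sum, mul_left_comm (c _)]
        exact sum_comm
    _ = ∑ j, a j := by simp only [h.sum_mul_inner_sq, he, one_pow, mul_one]

theorem sum_eq_finrank [FiniteDimensional ℝ E] (h : IsIdentityDecomposition u c)
    (hu : ∀ i, ‖u i‖ = 1) : ∑ i, c i = Module.finrank ℝ E := by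
  have hparseval : ∀ i, ∑ j, ⟪u i, stdOrthonormalBasis ℝ E j⟫ ^ 2 = 1 := fun i => by
    rw [(stdOrthonormalBasis ℝ E).sum_sq_inner_left, hu i, one_pow]
  simpa [hparseval] using h.sum_mul_sum_mul_inner_sq (stdOrthonormalBasis ℝ E).norm_eq_one 1

theorem eq_zero_of_inner_nonpos (h : IsIdentityDecomposition u c) (hc : ∀ i, 0 ≤ c i)
    (hu : ∑ i, c i • u i = 0) {x : E} (hx : ∀ i, ⟪x, u i⟫ ≤ 0) : x = 0 := by
  have hterm : ∀ i ∈ univ, c i * ⟪x, u i⟫ = 0 :=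
    (sum_eq_zero_iff_of_nonpos fun i _ => mul_nonpos_of_nonneg_of_nonpos (hc i) (hx i)).1
      (sum_mul_inner_eq_zero hu x)
  rw [← h x]
  exact sum_eq_zero fun i hi => by rw [real_inner_comm, hterm i hi, zero_smul]

end IsIdentityDecomposition

/-- The solid ellipsoid with centre `y` and semi-axes of length `α j` along `v j`. A zero semi-axis
does not flatten it: as `0⁻¹ = 0`, the corresponding coordinate is then unconstrained. -/
def ellipsoid (v : OrthonormalBasis κ ℝ E) (α : κ → ℝ) (y : E) : Set E :=
  {x | ∑ j, ((α j) ^ 2)⁻¹ * ⟪x - y, v j⟫ ^ 2 ≤ 1}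

theorem add_sum_smul_mem_ellipsoid {w : E} (hw : ‖w‖ ≤ 1) :
    y + ∑ j, (α j * ⟪w, v j⟫) • v j ∈ ellipsoid v α y := by
  have hcoord : ∀ j, ⟪∑ k, (α k * ⟪w, v k⟫) • v k, v j⟫ = α j * ⟪w, v j⟫ :=
    v.orthonormal.inner_left_fintype _
  simp only [ellipsoid, Set.mem_ofPred_eq, add_sub_cancel_left, hcoord]
  calc ∑ j, ((α j) ^ 2)⁻¹ * (α j * ⟪w, v j⟫) ^ 2 ≤ ∑ j, ⟪w, v j⟫ ^ 2 := by
        gcongr with j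
        rw [mul_pow, ← mul_assoc]
        exact mul_le_of_le_one_left (sq_nonneg _) inv_mul_le_one
    _ = ‖w‖ ^ 2 := v.sum_sq_inner_left w
    _ ≤ 1 := pow_le_one₀ (norm_nonneg w) hw

theorem inner_add_sum_mul_inner_sq_le {w : E} (hw : ‖w‖ ≤ 1) {b : ℝ}
    (hb : ∀ x ∈ ellipsoid v α y, ⟪x, w⟫ ≤ b) : ⟪y, w⟫ + ∑ j, α j * ⟪w, v j⟫ ^ 2 ≤ b := by
  calc ⟪y, w⟫ + ∑ j, α j * ⟪w, v j⟫ ^ 2 = ⟪y + ∑ j, (α j * ⟪w, v j⟫) • v j, w⟫ := by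
        simp only [inner_add_left, sum_inner, real_inner_smul_left,
          fun j => real_inner_comm w (v j), mul_assoc, sq]
    _ ≤ b := hb _ (add_sum_smul_mem_ellipsoid hw)

theorem sum_le_card_of_ellipsoid_subset (hu : ∀ i, ‖u i‖ = 1) (hc : ∀ i, 0 ≤ c i)
    (hcu : ∑ i, c i • u i = 0) (h : IsIdentityDecomposition u c)
    (hsub : ellipsoid v α y ⊆ {x | ∀ i, ⟪x, u i⟫ ≤ 1}) : ∑ j, α j ≤ Fintype.card κ := by
  have : FiniteDimensional ℝ E := v.toBasis.finiteDimensional_of_finite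
  calc ∑ j, α j = ∑ i, c i * (⟪y, u i⟫ + ∑ j, α j * ⟪u i, v j⟫ ^ 2) := by
        simp only [mul_add, sum_add_distrib, sum_mul_inner_eq_zero hcu,
          h.sum_mul_sum_mul_inner_sq v.norm_eq_one, zero_add]
    _ ≤ ∑ i, c i * 1 := by
        gcongr with i
        · exact hc i
        · exact inner_add_sum_mul_inner_sq_le (hu i).le fun x hx => hsub hx i
    _ = Fintype.card κ := by
        simp only [mul_one, h.sum_eq_finrank hu, Module.finrank_eq_card_basis v.toBasis]

theorem stmt_1_general (hu : ∀ i, ‖u i‖ = 1) (hc : ∀ i, 0 ≤ c i) (hcu : ∑ i, c i • u i = 0)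
    (h : IsIdentityDecomposition u c) (hα : ∀ j, 0 < α j)
    (hsub : ellipsoid v α y ⊆ {x | ∀ i, ⟪x, u i⟫ ≤ 1}) (hprod : 1 ≤ ∏ j, α j) :
    (∀ j, α j = 1) ∧ y = 0 := by
  have hone : ∀ j, α j = 1 := fun j =>
    eq_one_of_one_le_prod_of_sum_le_card (fun j _ => hα j) hprod
      (sum_le_card_of_ellipsoid_subset hu hc hcu h hsub) j (mem_univ j)
  refine ⟨hone, h.eq_zero_of_inner_nonpos hc hcu fun i => ?_⟩
  have htouch := inner_add_sum_mul_inner_sq_le (hu i).le fun x hx => hsub hx i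
  simp only [hone, one_mul, v.sum_sq_inner_left, hu i, one_pow] at htouch
  linarith

end

/-- The 'if' part of John's theorem (Proposition 1, equality/uniqueness part):
under John's conditions, if the ellipsoid `E ⊆ K` has `∏ j, α j = 1`,
then `α j = 1` for every `j` and the centre `y` is `0`;
i.e. the unit ball is the unique ellipsoid of maximal volume in `K`. -/
theorem stmt_1 {n m : ℕ} (hn : 1 ≤ n) (hm : 1 ≤ m)
    (u : Fin m → EuclideanSpace ℝ (Fin n)) (c : Fin m → ℝ)
    (hu : ∀ i, ‖u i‖ = 1) (hc : ∀ i, 0 < c i)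
    (ha : ∑ i, c i • u i = 0)
    (hb : ∀ x : EuclideanSpace ℝ (Fin n), ∑ i, (c i * ⟪u i, x⟫) • u i = x)
    (y : EuclideanSpace ℝ (Fin n))
    (v : OrthonormalBasis (Fin n) ℝ (EuclideanSpace ℝ (Fin n)))
    (α : Fin n → ℝ) (hα : ∀ j, 0 < α j)
    (hEK : {x : EuclideanSpace ℝ (Fin n) |
        ∑ j, ((α j) ^ 2)⁻¹ * ⟪x - y, v j⟫ ^ 2 ≤ 1} ⊆
      {x : EuclideanSpace ℝ (Fin n) | ∀ i, ⟪x, u i⟫ ≤ 1})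
    (hprod : ∏ j, α j = 1) :
    (∀ j, α j = 1) ∧ y = 0 :=
  stmt_1_general hu (fun i => (hc i).le) ha hb hα hEK hprod.ge
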